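/- arXiv:2203.02663 — 2 statements merged into one kernel-verified Lean document; each statement's English description precedes it below -/
import Mathlib

section
/- (Theorem 5.1, auxiliary kernel K̄₁.) With the matrix triplet data as in the context, fix x ∈ ℝ, assume Γ̄(x) is invertible, and let K₁(x, z) := −C̄·e^{−iĀx}·Γ̄(x)^{−1}·e^{−iĀz}·B̄. Then for every y > x the auxiliary Marchenko relation K̄₁(x, y) = i·∫_x^∞ K₁(x, z)·Ω'(z + y) dz holds with the explicit value K̄₁(x, y) = C̄·e^{−iĀx}·Γ̄(x)^{−1}·e^{−iĀx}·M̄·A·e^{iA(x+y)}·B; that is, i·∫_x^∞ K₁(x, z)·Ω'(z + y) dz = C̄·e^{−iĀx}·Γ̄(x)^{−1}·e^{−iĀx}·M̄·A·e^{iA(x+y)}·B. -/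
open MeasureTheory Matrix

/-- e^{iAt} for a complex square matrix A and real t. -/
noncomputable def eiA {n : ℕ} (A : Matrix (Fin n) (Fin n) ℂ) (t : ℝ) :
    Matrix (Fin n) (Fin n) ℂ :=
  NormedSpace.exp ((Complex.I * t) • A)

/-!
Substituting `z = s + x` and using the group law of `t ↦ e^{iAt}`, the product `K₁(x, z) Ω'(z + y)`
factors, up to a scalar, as `P e^{-iĀs} B̄ C e^{iAs} Q` with `P`, `Q` independent of `s`. Its
integral over `s > 0` is `P M̄ Q` as soon as the integral defining `M̄` converges. On a
generalized eigenvector of `X` for the eigenvalue `μ`, `e^{zX}` acts as `e^{zμ}` times a polynomial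
in `z`; since the spectrum of `Ā` lies strictly below that of `A`, the integrand defining `M̄`
decays exponentially.
-/

section Exponential

open NormedSpace (exp)

variable {ι 𝕜 : Type*} [Fintype ι] [DecidableEq ι] [RCLike 𝕜]

attribute [local instance] Matrix.linftyOpNormedRing Matrix.linftyOpNormedAlgebra

theorem continuous_exp_matrix : Continuous (exp : Matrix ι ι 𝕜 → Matrix ι ι 𝕜) := by
  let _ : NormedAlgebra ℚ (Matrix ι ι 𝕜) := NormedAlgebra.restrictScalars ℚ 𝕜 _
  exact NormedSpace.exp_continuous

theorem hasSum_exp_mulVec (X : Matrix ι ι 𝕜) (v : ι → 𝕜) :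
    HasSum (fun j : ℕ => (j.factorial⁻¹ : 𝕜) • (X ^ j *ᵥ v)) (exp X *ᵥ v) := by
  have hX : HasSum (fun j : ℕ => (j.factorial⁻¹ : 𝕜) • X ^ j) (exp X) :=
    NormedSpace.exp_series_hasSum_exp' X
  simpa only [Function.comp_def, AddMonoidHom.mk'_apply, smul_mulVec] using
    hX.map (AddMonoidHom.mk' (· *ᵥ v) fun Y Z => add_mulVec Y Z v)
      (continuous_id.matrix_mulVec continuous_const)

theorem exp_mulVec_eq_sum_of_pow_mulVec_eq_zero {N : Matrix ι ι 𝕜} {v : ι → 𝕜} {k : ℕ}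
    (hN : N ^ k *ᵥ v = 0) :
    exp N *ᵥ v = ∑ j ∈ Finset.range k, (j.factorial⁻¹ : 𝕜) • (N ^ j *ᵥ v) := by
  refine (hasSum_exp_mulVec N v).unique (hasSum_sum_of_ne_finset_zero fun j hj => ?_)
  have hkj : k ≤ j := by simpa using hj
  rw [← Nat.sub_add_cancel hkj, pow_add, ← mulVec_mulVec, hN, mulVec_zero, smul_zero]

end Exponential

theorem exists_lt_between_of_finite {α : Type*} [LinearOrder α] [DenselyOrdered α]
    [NoMinOrder α] [NoMaxOrder α] [Nonempty α] {s t : Set α} (hs : s.Finite) (ht : t.Finite)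
    (hst : ∀ x ∈ s, ∀ y ∈ t, x < y) :
    ∃ a b, a < b ∧ (∀ x ∈ s, x < a) ∧ ∀ y ∈ t, b < y := by
  obtain ⟨a, hsa, hat⟩ := Order.exists_between_finsets hs.toFinset ht.toFinset (by simpa using hst)
  obtain ⟨b, hab, hbt⟩ := Order.exists_between_finsets {a} ht.toFinset (by simpa using hat)
  exact ⟨a, b, by simpa using hab, by simpa using hsa, by simpa using hbt⟩

section Growth

open Asymptotics Filter
open NormedSpace (exp)

variable {ι κ : Type*} [Fintype ι] [DecidableEq ι] [Fintype κ] [DecidableEq κ]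

theorem exp_smul_mulVec_eq_of_pow_sub_mulVec_eq_zero {X : Matrix ι ι ℂ} {μ : ℂ} {v : ι → ℂ}
    {k : ℕ} (hv : (X - μ • 1) ^ k *ᵥ v = 0) (z : ℂ) :
    exp (z • X) *ᵥ v = ∑ j ∈ Finset.range k,
      (z ^ j * Complex.exp (z * μ)) • (j.factorial⁻¹ : ℂ) • ((X - μ • 1) ^ j *ᵥ v) := by
  have hsplit : z • X = (z * μ) • 1 + z • (X - μ • 1) := by
    rw [smul_sub, smul_smul, add_sub_cancel]
  have hscalar : exp ((z * μ) • (1 : Matrix ι ι ℂ)) = Complex.exp (z * μ) • 1 := by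
    simp only [smul_one_eq_diagonal, exp_diagonal, Pi.exp_def, Complex.exp_eq_exp_ℂ]
  have hnil : (z • (X - μ • 1)) ^ k *ᵥ v = 0 := by
    rw [smul_pow, smul_mulVec, hv, smul_zero]
  rw [hsplit, exp_add_of_commute _ _ ((Commute.one_left _).smul_left _), hscalar, smul_one_mul,
    smul_mulVec, exp_mulVec_eq_sum_of_pow_mulVec_eq_zero hnil, Finset.smul_sum]
  refine Finset.sum_congr rfl fun j _ => ?_
  rw [smul_pow, smul_mulVec, smul_smul, smul_smul, smul_smul]
  congr 1
  ring

theorem isBigO_pow_mul_cexp {c μ : ℂ} {a : ℝ} (h : (c * μ).re < a) (j : ℕ) :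
    (fun t : ℝ => (c * t) ^ j * Complex.exp (c * t * μ)) =O[atTop] fun t => Real.exp (a * t) := by
  have hpow : (fun t : ℝ => (c * t) ^ j) =O[atTop] fun t => Real.exp ((a - (c * μ).re) * t) := by
    refine .trans (.of_bound (‖c‖ ^ j) (.of_forall fun t => ?_))
      (isLittleO_pow_exp_pos_mul_atTop j (sub_pos.2 h)).isBigO
    simp [mul_pow]
  have hexp : (fun t : ℝ => Complex.exp (c * t * μ)) =O[atTop]
      fun t => Real.exp ((c * μ).re * t) := by
    refine .of_norm_le fun t => ?_
    rw [Complex.norm_exp, mul_right_comm, Complex.re_mul_ofReal]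
  refine (hpow.mul hexp).congr_right fun t => ?_
  rw [← Real.exp_add, ← add_mul, sub_add_cancel]

theorem isBigO_exp_smul_mulVec_of_mem_maxGenEigenspace {X : Matrix ι ι ℂ} {c μ : ℂ} {a : ℝ}
    (hμ : (c * μ).re < a) {v : ι → ℂ} (hv : v ∈ Module.End.maxGenEigenspace X.toLin' μ) :
    (fun t : ℝ => exp ((c * t) • X) *ᵥ v) =O[atTop] fun t => Real.exp (a * t) := by
  obtain ⟨k, hk⟩ := Module.End.mem_maxGenEigenspace _ _ _ |>.1 hv
  have hnil : (X - μ • 1) ^ k *ᵥ v = 0 := by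
    rwa [← toLin'_apply, toLin'_pow, map_sub, map_smul, toLin'_one]
  simp only [exp_smul_mulVec_eq_of_pow_sub_mulVec_eq_zero hnil]
  refine IsBigO.fun_sum fun j _ => ?_
  simpa only [smul_eq_mul, mul_one] using
    (isBigO_pow_mul_cexp hμ j).smul (isBigO_const_const _ (one_ne_zero (α := ℝ)) _)

theorem isBigO_exp_smul_mulVec {X : Matrix ι ι ℂ} {c : ℂ} {a : ℝ}
    (hX : ∀ μ ∈ spectrum ℂ X, (c * μ).re < a) (v : ι → ℂ) :
    (fun t : ℝ => exp ((c * t) • X) *ᵥ v) =O[atTop] fun t => Real.exp (a * t) := by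
  have hv : v ∈ ⨆ μ, Module.End.maxGenEigenspace X.toLin' μ := by
    rw [Module.End.iSup_maxGenEigenspace_eq_top]
    exact Submodule.mem_top
  induction hv using Submodule.iSup_induction' with
  | zero => simpa only [mulVec_zero] using isBigO_zero _ _
  | add u w _ _ hu hw => simpa only [mulVec_add] using hu.add hw
  | mem μ w hw =>
    rcases eq_or_ne w 0 with rfl | hw0
    · simpa only [mulVec_zero] using isBigO_zero _ _
    have hgen : Module.End.HasUnifEigenvalue X.toLin' μ ⊤ :=
      (Submodule.ne_bot_iff _).2 ⟨w, hw, hw0⟩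
    have hμ : μ ∈ spectrum ℂ X :=
      spectrum_toLin' X ▸ Module.End.HasEigenvalue.mem_spectrum (hgen.lt one_pos)
    exact isBigO_exp_smul_mulVec_of_mem_maxGenEigenspace (hX μ hμ) hw

theorem isBigO_exp_smul_apply {X : Matrix ι ι ℂ} {c : ℂ} {a : ℝ}
    (hX : ∀ μ ∈ spectrum ℂ X, (c * μ).re < a) (i j : ι) :
    (fun t : ℝ => exp ((c * t) • X) i j) =O[atTop] fun t => Real.exp (a * t) := by
  simpa using isBigO_pi.1 (isBigO_exp_smul_mulVec hX (Pi.single j 1)) i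

theorem isBigO_exp_mul_mul_exp_apply {X : Matrix ι ι ℂ} {Y : Matrix κ κ ℂ} {c d : ℂ} {a b : ℝ}
    (hX : ∀ μ ∈ spectrum ℂ X, (c * μ).re < a) (hY : ∀ ν ∈ spectrum ℂ Y, (d * ν).re < b)
    (D : Matrix ι κ ℂ) (i : ι) (j : κ) :
    (fun t : ℝ => (exp ((c * t) • X) * D * exp ((d * t) • Y)) i j)
      =O[atTop] fun t => Real.exp ((a + b) * t) := by
  simp only [mul_apply, Finset.sum_mul, add_mul, Real.exp_add]
  refine IsBigO.fun_sum fun l _ => ?_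
  refine IsBigO.fun_sum fun k _ => ?_
  simpa only [mul_comm (D k l)] using
    ((isBigO_exp_smul_apply hX i k).const_mul_left (D k l)).mul (isBigO_exp_smul_apply hY l j)

theorem integrableOn_exp_mul_mul_exp_apply {X : Matrix ι ι ℂ} {Y : Matrix κ κ ℂ} {c d : ℂ}
    (hXY : ∀ μ ∈ spectrum ℂ X, ∀ ν ∈ spectrum ℂ Y, (c * μ).re + (d * ν).re < 0)
    (D : Matrix ι κ ℂ) (i : ι) (j : κ) (x : ℝ) :
    IntegrableOn (fun t : ℝ => (exp ((c * t) • X) * D * exp ((d * t) • Y)) i j) (Set.Ioi x) := by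
  obtain ⟨a, b, hab, ha, hb⟩ := exists_lt_between_of_finite
    (X.finite_spectrum.image fun μ => (c * μ).re) (Y.finite_spectrum.image fun ν => -(d * ν).re)
    (by
      rintro _ ⟨μ, hμ, rfl⟩ _ ⟨ν, hν, rfl⟩
      linarith [hXY μ hμ ν hν])
  have hdecay := isBigO_exp_mul_mul_exp_apply (b := -b)
    (fun μ hμ => ha _ ⟨μ, hμ, rfl⟩) (fun ν hν => lt_neg.1 (hb _ ⟨ν, hν, rfl⟩)) D i j
  have hcont : Continuous fun t : ℝ => (exp ((c * t) • X) * D * exp ((d * t) • Y)) i j :=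
    (((continuous_exp_matrix.comp (by fun_prop)).matrix_mul continuous_const).matrix_mul
      (continuous_exp_matrix.comp (by fun_prop))).matrix_elem i j
  refine (integrable_norm_iff hcont.aestronglyMeasurable).1
    (integrable_of_isBigO_exp_neg (sub_pos.2 hab) hcont.norm.continuousOn ?_)
  refine hdecay.norm_left.congr_right fun t => ?_
  ring_nf

end Growth

theorem integral_mul_mul_apply {α l m n o 𝕜 : Type*} [MeasurableSpace α] [Fintype m] [Fintype n]
    [RCLike 𝕜] {ρ : Measure α} {F : α → Matrix m n 𝕜}
    (hF : ∀ i j, Integrable (fun z => F z i j) ρ)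
    (P : Matrix l m 𝕜) (Q : Matrix n o 𝕜) (i : l) (j : o) :
    ∫ z, (P * F z * Q) i j ∂ρ = (P * of (fun i j => ∫ z, F z i j ∂ρ) * Q) i j := by
  have hterm (p : m) (q : n) : Integrable (fun z => P i p * F z p q * Q q j) ρ :=
    ((hF p q).const_mul _).mul_const _
  simp only [mul_apply, Finset.sum_mul, of_apply]
  rw [integral_finsetSum _ fun q _ => integrable_finsetSum _ fun p _ => hterm p q]
  refine Finset.sum_congr rfl fun q _ => ?_
  rw [integral_finsetSum _ fun p _ => hterm p q]
  exact Finset.sum_congr rfl fun p _ => by rw [integral_mul_const, integral_const_mul]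

theorem setIntegral_Ioi_eq_setIntegral_Ioi_zero_comp_add {E : Type*} [NormedAddCommGroup E]
    [NormedSpace ℝ E] (g : ℝ → E) (x : ℝ) :
    ∫ z in Set.Ioi x, g z = ∫ s in Set.Ioi 0, g (s + x) := by
  simpa using ((measurePreserving_add_right volume x).setIntegral_preimage_emb
    (measurableEmbedding_addRight x) g (Set.Ioi x)).symm

theorem eiA_add {n : ℕ} (A : Matrix (Fin n) (Fin n) ℂ) (s t : ℝ) :
    eiA A (s + t) = eiA A s * eiA A t := by
  rw [eiA, eiA, eiA, ← exp_add_of_commute _ _ (((Commute.refl A).smul_left _).smul_right _),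
    ← add_smul, ← mul_add, Complex.ofReal_add]

theorem commute_eiA {n : ℕ} (A : Matrix (Fin n) (Fin n) ℂ) (t : ℝ) : Commute A (eiA A t) :=
  ((Commute.refl A).smul_right _).exp_right

theorem integrableOn_eiA_neg_mul_mul_eiA_apply {m n : ℕ} {A : Matrix (Fin n) (Fin n) ℂ}
    {Ab : Matrix (Fin m) (Fin m) ℂ}
    (hgap : ∀ μ ∈ spectrum ℂ A, ∀ ν ∈ spectrum ℂ Ab, ν.im < μ.im)
    (D : Matrix (Fin m) (Fin n) ℂ) (i : Fin m) (j : Fin n) (x : ℝ) :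
    IntegrableOn (fun z => (eiA Ab (-z) * D * eiA A z) i j) (Set.Ioi x) := by
  have hre : ∀ ν ∈ spectrum ℂ Ab, ∀ μ ∈ spectrum ℂ A,
      (-Complex.I * ν).re + (Complex.I * μ).re < 0 := fun ν hν μ hμ => by
    simpa using hgap μ hμ ν hν
  simpa [eiA] using integrableOn_exp_mul_mul_exp_apply hre D i j x

theorem eiA_neg_add_mul_mul_eiA_add {m n : ℕ} (A : Matrix (Fin n) (Fin n) ℂ)
    (Ab : Matrix (Fin m) (Fin m) ℂ) (D : Matrix (Fin m) (Fin n) ℂ) (s x y : ℝ) :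
    eiA Ab (-(s + x)) * D * (A * eiA A (s + x + y)) =
      eiA Ab (-x) * (eiA Ab (-s) * D * eiA A s) * (A * eiA A (x + y)) := by
  have hAb : eiA Ab (-(s + x)) = eiA Ab (-x) * eiA Ab (-s) := by
    rw [← eiA_add, neg_add_rev]
  have hA : A * eiA A (s + x + y) = eiA A s * (A * eiA A (x + y)) := by
    rw [add_assoc, eiA_add, (commute_eiA A s).left_comm]
  simp only [hAb, hA, Matrix.mul_assoc]

/-- `L` stands for `C̄ e^{-iĀx} Γ̄(x)⁻¹`. -/
theorem marchenko_auxiliary_Kb1_general {m n : ℕ}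
    {A : Matrix (Fin n) (Fin n) ℂ} {Ab : Matrix (Fin m) (Fin m) ℂ}
    (hgap : ∀ μ ∈ spectrum ℂ A, ∀ ν ∈ spectrum ℂ Ab, ν.im < μ.im)
    (B : Matrix (Fin n) (Fin 1) ℂ) (C : Matrix (Fin 1) (Fin n) ℂ) (Bb : Matrix (Fin m) (Fin 1) ℂ)
    {Mb : Matrix (Fin m) (Fin n) ℂ}
    (hMb : ∀ i j, Mb i j = ∫ z in Set.Ioi (0 : ℝ), (eiA Ab (-z) * Bb * C * eiA A z) i j)
    {x : ℝ} {L : Matrix (Fin 1) (Fin m) ℂ} {K₁ : ℝ → ℂ}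
    (hK₁ : ∀ z, x < z → K₁ z = -(L * eiA Ab (-z) * Bb) 0 0) (y : ℝ) :
    Complex.I * (∫ z in Set.Ioi x, K₁ z * (Complex.I * ((C * (A * eiA A (z + y)) * B) 0 0))) =
      (L * eiA Ab (-x) * Mb * (A * eiA A (x + y)) * B) 0 0 := by
  have hMb_eq : Mb = of fun i j =>
      ∫ z in Set.Ioi (0 : ℝ), (eiA Ab (-z) * (Bb * C) * eiA A z) i j := by
    ext i j
    simp only [hMb, of_apply, Matrix.mul_assoc]
  have hproduct (s : ℝ) :
      (L * eiA Ab (-(s + x)) * Bb) 0 0 * (C * (A * eiA A (s + x + y)) * B) 0 0 =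
        (L * eiA Ab (-x) * (eiA Ab (-s) * (Bb * C) * eiA A s) * (A * eiA A (x + y) * B)) 0 0 :=
    calc (L * eiA Ab (-(s + x)) * Bb) 0 0 * (C * (A * eiA A (s + x + y)) * B) 0 0
        = (L * eiA Ab (-(s + x)) * Bb * (C * (A * eiA A (s + x + y)) * B)) 0 0 := by
          rw [mul_apply (M := _ * Bb), Fin.sum_univ_one]
      _ = (L * (eiA Ab (-(s + x)) * (Bb * C) * (A * eiA A (s + x + y))) * B) 0 0 := by
          simp only [Matrix.mul_assoc]
      _ = _ := by
          rw [eiA_neg_add_mul_mul_eiA_add]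
          simp only [Matrix.mul_assoc]
  have hintegrand : ∀ s ∈ Set.Ioi (0 : ℝ),
      K₁ (s + x) * (Complex.I * ((C * (A * eiA A (s + x + y)) * B) 0 0)) = -Complex.I *
        (L * eiA Ab (-x) * (eiA Ab (-s) * (Bb * C) * eiA A s) * (A * eiA A (x + y) * B)) 0 0 := by
    intro s hs
    rw [hK₁ (s + x) (lt_add_of_pos_left x hs), ← hproduct]
    ring
  rw [setIntegral_Ioi_eq_setIntegral_Ioi_zero_comp_add,
    setIntegral_congr_fun measurableSet_Ioi hintegrand, integral_const_mul,
    integral_mul_mul_apply fun i j => integrableOn_eiA_neg_mul_mul_eiA_apply hgap (Bb * C) i j 0,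
    ← hMb_eq, ← mul_assoc, mul_neg, Complex.I_mul_I, neg_neg, one_mul]
  simp only [Matrix.mul_assoc]

/-- Theorem 5.1, auxiliary kernel K̄₁: the auxiliary Marchenko relation
K̄₁(x,y) = i ∫_x^∞ K₁(x,z) Ω'(z+y) dz holds with the explicit value
K̄₁(x,y) = C̄ e^{-iĀx} Γ̄(x)⁻¹ e^{-iĀx} M̄ A e^{iA(x+y)} B. -/
theorem marchenko_auxiliary_Kb1
    (𝒩 𝒩b : ℕ)
    (A : Matrix (Fin 𝒩) (Fin 𝒩) ℂ) (hA : ∀ μ ∈ spectrum ℂ A, 0 < μ.im)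
    (B : Matrix (Fin 𝒩) (Fin 1) ℂ) (C : Matrix (Fin 1) (Fin 𝒩) ℂ)
    (Ab : Matrix (Fin 𝒩b) (Fin 𝒩b) ℂ) (hAb : ∀ μ ∈ spectrum ℂ Ab, μ.im < 0)
    (Bb : Matrix (Fin 𝒩b) (Fin 1) ℂ) (Cb : Matrix (Fin 1) (Fin 𝒩b) ℂ)
    (M : Matrix (Fin 𝒩) (Fin 𝒩b) ℂ)
    (hM : ∀ i j, M i j = ∫ z in Set.Ioi (0 : ℝ), (eiA A z * B * Cb * eiA Ab (-z)) i j)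
    (Mb : Matrix (Fin 𝒩b) (Fin 𝒩) ℂ)
    (hMb : ∀ i j, Mb i j = ∫ z in Set.Ioi (0 : ℝ), (eiA Ab (-z) * Bb * C * eiA A z) i j)
    (x : ℝ)
    (Γb : Matrix (Fin 𝒩b) (Fin 𝒩b) ℂ)
    (hΓb : Γb = 1 - eiA Ab (-x) * Mb * A * eiA A (2 * x) * M * eiA Ab (-x))
    (hΓbinv : IsUnit Γb)
    (K₁ : ℝ → ℂ)
    (hK₁ : ∀ z : ℝ, x ≤ z →
      K₁ z = -((Cb * eiA Ab (-x) * Γb⁻¹ * eiA Ab (-z) * Bb) 0 0)) :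
    ∀ y : ℝ, x < y →
      Complex.I * (∫ z in Set.Ioi x, K₁ z * (Complex.I * ((C * (A * eiA A (z + y)) * B) 0 0)))
        = (Cb * eiA Ab (-x) * Γb⁻¹ * eiA Ab (-x) * Mb * (A * eiA A (x + y)) * B) 0 0 := by
  intro y _
  exact marchenko_auxiliary_Kb1_general (fun μ hμ ν hν => (hAb ν hν).trans (hA μ hμ)) B C Bb hMb
    (fun z hz => hK₁ z hz.le) y
end

section
/- (Example 6.3, asymptotics and transmission coefficient.) Let ζ ∈ ℝ and λ := ζ², and define ψ₁(ζ, x) := −9ζ·exp(iλx + 2x − 2·art(1/3 − i·e^{6x})) / ((λ + 2i)·(2 + 3i·e^{6x})) and ψ₂(ζ, x) := (4(λ − i) − 3i·e^{6x}·(λ + 2i))·exp(iλx + 2·art(1/3 − i·e^{6x})) / ((λ + 2i)·(−4 + 3i·e^{6x})). Then: (i) ψ₁(ζ, x) → 0 as x → +∞ and as x → −∞; (ii) e^{−iλx}·ψ₂(ζ, x) → 1 as x → +∞; (iii) e^{−iλx}·ψ₂(ζ, x) → −2(λ − i)/(λ + 2i) as x → −∞, i.e., the limit equals 1/T(ζ)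 for the transmission coefficient T(ζ) = −(λ + 2i)/(2(λ − i)). -/
open Filter

/-- Principal inverse hyperbolic tangent. -/
noncomputable def art (w : ℂ) : ℂ :=
  (Complex.log (1 + w) - Complex.log (1 - w)) / 2

/-- The first component of the Jost solution ψ of Example 6.3. -/
noncomputable def ψ₁Ex (ζ : ℂ) (x : ℝ) : ℂ :=
  -9 * ζ * Complex.exp (Complex.I * ζ ^ 2 * x + 2 * x
      - 2 * art (1 / 3 - Complex.I * Complex.exp (6 * x)))
    / ((ζ ^ 2 + 2 * Complex.I) * (2 + 3 * Complex.I * Complex.exp (6 * x)))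

/-- The second component of the Jost solution ψ of Example 6.3. -/
noncomputable def ψ₂Ex (ζ : ℂ) (x : ℝ) : ℂ :=
  (4 * (ζ ^ 2 - Complex.I) - 3 * Complex.I * Complex.exp (6 * x) * (ζ ^ 2 + 2 * Complex.I))
    * Complex.exp (Complex.I * ζ ^ 2 * x
      + 2 * art (1 / 3 - Complex.I * Complex.exp (6 * x)))
    / ((ζ ^ 2 + 2 * Complex.I) * (-4 + 3 * Complex.I * Complex.exp (6 * x)))

/-!
Away from `w = ±1` one has `exp (2 * art w) = (1 + w) / (1 - w)`, so with `E = exp (6 * x)` and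
`λ = ζ ^ 2` both components are elementary:
`ψ₁ = -9ζ / (λ + 2i) * exp (iλx + 2x) / (4 - 3iE)` and
`exp (-iλx) * ψ₂ = 1 - 6λ / (λ + 2i) * (2 + 3iE)⁻¹`.
The numerator of `ψ₁` has modulus `exp ((2 - Im λ) * x)`, while its denominator satisfies
`4 ≤ ‖4 - 3iE‖` and `3E ≤ ‖4 - 3iE‖`; hence `ψ₁` decays at `-∞` when `Im λ < 2` and at `+∞`
when `-4 < Im λ`. For `ψ₂` it remains to note that `(2 + 3iE)⁻¹` tends to `1 / 2` at `-∞` and to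
`0` at `+∞`.
-/

open Complex Topology

lemma exp_two_mul_art {w : ℂ} (hadd : 1 + w ≠ 0) (hsub : 1 - w ≠ 0) :
    exp (2 * art w) = (1 + w) / (1 - w) := by
  rw [art, mul_div_cancel₀ _ two_ne_zero, exp_sub, exp_log hadd, exp_log hsub]

lemma four_sub_three_mul_I_mul_ofReal_ne_zero (E : ℝ) : (4 - 3 * I * E : ℂ) ≠ 0 :=
  ne_zero_of_re_pos (by simp)

lemma two_add_three_mul_I_mul_ofReal_ne_zero (E : ℝ) : (2 + 3 * I * E : ℂ) ≠ 0 :=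
  ne_zero_of_re_pos (by simp)

lemma exp_two_mul_art_one_third_sub_I_mul_ofReal (E : ℝ) :
    exp (2 * art (1 / 3 - I * E)) = (4 - 3 * I * E) / (2 + 3 * I * E) := by
  have hadd : 1 + (1 / 3 - I * E) = (4 - 3 * I * E) / 3 := by ring
  have hsub : 1 - (1 / 3 - I * E) = (2 + 3 * I * E) / 3 := by ring
  have hnum := four_sub_three_mul_I_mul_ofReal_ne_zero E
  have hden := two_add_three_mul_I_mul_ofReal_ne_zero E
  rw [exp_two_mul_art, hadd, hsub, div_div_div_cancel_right₀ three_ne_zero]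
  · exact hadd ▸ div_ne_zero hnum three_ne_zero
  · exact hsub ▸ div_ne_zero hden three_ne_zero

lemma cexp_six_mul_ofReal (x : ℝ) : exp (6 * x) = (Real.exp (6 * x) : ℂ) := by
  simp

lemma ψ₁Ex_eq (ζ : ℂ) (x : ℝ) :
    ψ₁Ex ζ x = -9 * ζ / (ζ ^ 2 + 2 * I) *
      (exp (I * ζ ^ 2 * x + 2 * x) / (4 - 3 * I * Real.exp (6 * x))) := by
  have hden := two_add_three_mul_I_mul_ofReal_ne_zero (Real.exp (6 * x))
  rw [ψ₁Ex, cexp_six_mul_ofReal, exp_sub, exp_two_mul_art_one_third_sub_I_mul_ofReal]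
  generalize (2 + 3 * I * Real.exp (6 * x) : ℂ) = D at hden ⊢
  field_simp

lemma exp_mul_ψ₂Ex_eq {ζ : ℂ} (hζ : ζ ^ 2 + 2 * I ≠ 0) (x : ℝ) :
    exp (-I * ζ ^ 2 * x) * ψ₂Ex ζ x =
      1 - 6 * ζ ^ 2 / (ζ ^ 2 + 2 * I) * (2 + 3 * I * Real.exp (6 * x))⁻¹ := by
  have hphase : exp (-I * ζ ^ 2 * x) = (exp (I * ζ ^ 2 * x))⁻¹ := by
    rw [← exp_neg]
    ring_nf
  have hnum := four_sub_three_mul_I_mul_ofReal_ne_zero (Real.exp (6 * x))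
  have hden := two_add_three_mul_I_mul_ofReal_ne_zero (Real.exp (6 * x))
  have hneg : (-4 + 3 * I * Real.exp (6 * x) : ℂ) = -(4 - 3 * I * Real.exp (6 * x)) := by ring
  have hsplit : 4 * (ζ ^ 2 - I) - 3 * I * Real.exp (6 * x) * (ζ ^ 2 + 2 * I) =
      6 * ζ ^ 2 - (ζ ^ 2 + 2 * I) * (2 + 3 * I * Real.exp (6 * x)) := by ring
  rw [ψ₂Ex, cexp_six_mul_ofReal, exp_add, exp_two_mul_art_one_third_sub_I_mul_ofReal, hphase, hneg,
    hsplit]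
  generalize (4 - 3 * I * Real.exp (6 * x) : ℂ) = N at hnum ⊢
  generalize (2 + 3 * I * Real.exp (6 * x) : ℂ) = D at hden ⊢
  generalize ζ ^ 2 + 2 * I = p at hζ ⊢
  field_simp
  ring

lemma norm_exp_I_mul_add_two_mul (l : ℂ) (x : ℝ) :
    ‖exp (I * l * x + 2 * x)‖ = Real.exp ((2 - l.im) * x) := by
  rw [← add_mul, norm_exp, re_mul_ofReal, add_re, I_mul_re, re_ofNat, neg_add_eq_sub]

lemma four_le_norm_four_sub (E : ℝ) : 4 ≤ ‖(4 - 3 * I * E : ℂ)‖ := by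
  simpa using re_le_norm (4 - 3 * I * E)

lemma three_mul_le_norm_four_sub (E : ℝ) : 3 * E ≤ ‖(4 - 3 * I * E : ℂ)‖ := by
  simpa using (neg_le_abs _).trans (abs_im_le_norm (4 - 3 * I * E))

lemma tendsto_exp_mul_atTop_of_neg {c : ℝ} (hc : c < 0) :
    Tendsto (fun x : ℝ => Real.exp (c * x)) atTop (𝓝 0) :=
  Real.tendsto_exp_atBot.comp (tendsto_id.const_mul_atTop_of_neg hc)

lemma tendsto_exp_mul_atBot_of_pos {c : ℝ} (hc : 0 < c) :
    Tendsto (fun x : ℝ => Real.exp (c * x)) atBot (𝓝 0) :=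
  Real.tendsto_exp_atBot.comp (tendsto_id.const_mul_atBot hc)

lemma tendsto_ψ₁Ex_atTop {ζ : ℂ} (hζ : -4 < (ζ ^ 2).im) :
    Tendsto (ψ₁Ex ζ) atTop (𝓝 0) := by
  have hbound (x : ℝ) : ‖exp (I * ζ ^ 2 * x + 2 * x) / (4 - 3 * I * Real.exp (6 * x))‖ ≤
      Real.exp ((-4 - (ζ ^ 2).im) * x) / 3 := by
    calc
      _ ≤ Real.exp ((2 - (ζ ^ 2).im) * x) / (3 * Real.exp (6 * x)) := by
        rw [norm_div, norm_exp_I_mul_add_two_mul]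
        gcongr
        exact three_mul_le_norm_four_sub _
      _ = Real.exp ((-4 - (ζ ^ 2).im) * x) / 3 := by
        rw [mul_comm 3, ← div_div, ← Real.exp_sub]
        ring_nf
  have hdecay : Tendsto (fun x : ℝ => Real.exp ((-4 - (ζ ^ 2).im) * x) / 3) atTop (𝓝 0) := by
    simpa using (tendsto_exp_mul_atTop_of_neg (by linarith)).div_const 3
  simpa [funext (ψ₁Ex_eq ζ)] using (squeeze_zero_norm hbound hdecay).const_mul _

lemma tendsto_ψ₁Ex_atBot {ζ : ℂ} (hζ : (ζ ^ 2).im < 2) :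
    Tendsto (ψ₁Ex ζ) atBot (𝓝 0) := by
  have hbound (x : ℝ) : ‖exp (I * ζ ^ 2 * x + 2 * x) / (4 - 3 * I * Real.exp (6 * x))‖ ≤
      Real.exp ((2 - (ζ ^ 2).im) * x) / 4 := by
    rw [norm_div, norm_exp_I_mul_add_two_mul]
    gcongr
    exact four_le_norm_four_sub _
  have hdecay : Tendsto (fun x : ℝ => Real.exp ((2 - (ζ ^ 2).im) * x) / 4) atBot (𝓝 0) := by
    simpa using (tendsto_exp_mul_atBot_of_pos (by linarith)).div_const 4
  simpa [funext (ψ₁Ex_eq ζ)] using (squeeze_zero_norm hbound hdecay).const_mul _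

lemma tendsto_inv_add_mul_ofReal_atTop {𝕜 : Type*} [RCLike 𝕜] (a : 𝕜) {b : 𝕜} (hb : b ≠ 0) :
    Tendsto (fun E : ℝ => (a + b * E)⁻¹) atTop (𝓝 0) :=
  tendsto_inv₀_cobounded.comp <| (tendsto_const_add_cobounded a).comp <|
    (tendsto_mul_left_cobounded hb).comp (RCLike.tendsto_ofReal_atTop_cobounded 𝕜)

lemma tendsto_exp_mul_ψ₂Ex_atTop {ζ : ℂ} (hζ : ζ ^ 2 + 2 * I ≠ 0) :
    Tendsto (fun x : ℝ => exp (-I * ζ ^ 2 * x) * ψ₂Ex ζ x) atTop (𝓝 1) := by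
  have hE : Tendsto (fun x : ℝ => Real.exp (6 * x)) atTop atTop :=
    Real.tendsto_exp_atTop.comp (tendsto_id.const_mul_atTop (by norm_num))
  have hinv : Tendsto (fun x : ℝ => (2 + 3 * I * Real.exp (6 * x) : ℂ)⁻¹) atTop (𝓝 0) :=
    (tendsto_inv_add_mul_ofReal_atTop 2 (by simp)).comp hE
  simpa only [exp_mul_ψ₂Ex_eq hζ, mul_zero, sub_zero] using (hinv.const_mul _).const_sub 1

lemma tendsto_exp_mul_ψ₂Ex_atBot {ζ : ℂ} (hζ : ζ ^ 2 + 2 * I ≠ 0) :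
    Tendsto (fun x : ℝ => exp (-I * ζ ^ 2 * x) * ψ₂Ex ζ x) atBot
      (𝓝 (-2 * (ζ ^ 2 - I) / (ζ ^ 2 + 2 * I))) := by
  have hE : Tendsto (fun x : ℝ => (Real.exp (6 * x) : ℂ)) atBot (𝓝 0) := by
    exact_mod_cast (tendsto_exp_mul_atBot_of_pos (c := 6) (by norm_num)).ofReal
  have hinv : Tendsto (fun x : ℝ => (2 + 3 * I * Real.exp (6 * x) : ℂ)⁻¹) atBot (𝓝 2⁻¹) := by
    simpa using ((hE.const_mul (3 * I)).const_add 2).inv₀ (by simp)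
  have hlimit : -2 * (ζ ^ 2 - I) / (ζ ^ 2 + 2 * I) =
      1 - 6 * ζ ^ 2 / (ζ ^ 2 + 2 * I) * 2⁻¹ := by
    field_simp
    ring
  simpa only [exp_mul_ψ₂Ex_eq hζ, hlimit] using (hinv.const_mul _).const_sub 1

theorem example63_asymptotics_general {ζ : ℂ} (hzero : ζ ^ 2 - I ≠ 0)
    (hpole : ζ ^ 2 + 2 * I ≠ 0) (him_gt : -4 < (ζ ^ 2).im) (him_lt : (ζ ^ 2).im < 2) :
    Tendsto (ψ₁Ex ζ) atTop (𝓝 0) ∧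
    Tendsto (ψ₁Ex ζ) atBot (𝓝 0) ∧
    Tendsto (fun x : ℝ => exp (-I * ζ ^ 2 * x) * ψ₂Ex ζ x) atTop (𝓝 1) ∧
    Tendsto (fun x : ℝ => exp (-I * ζ ^ 2 * x) * ψ₂Ex ζ x) atBot
      (𝓝 (-2 * (ζ ^ 2 - I) / (ζ ^ 2 + 2 * I))) ∧
    -2 * (ζ ^ 2 - I) / (ζ ^ 2 + 2 * I) = 1 / (-(ζ ^ 2 + 2 * I) / (2 * (ζ ^ 2 - I))) := by
  refine ⟨tendsto_ψ₁Ex_atTop him_gt, tendsto_ψ₁Ex_atBot him_lt,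
    tendsto_exp_mul_ψ₂Ex_atTop hpole, tendsto_exp_mul_ψ₂Ex_atBot hpole, ?_⟩
  rw [div_eq_div_iff hpole (div_ne_zero (neg_ne_zero.2 hpole) (mul_ne_zero two_ne_zero hzero))]
  field_simp

/-- Example 6.3: asymptotics of the Jost solution ψ and the transmission coefficient. -/
theorem example63_asymptotics (ζ : ℝ) :
    Tendsto (fun x : ℝ => ψ₁Ex (ζ : ℂ) x) atTop (nhds 0) ∧
    Tendsto (fun x : ℝ => ψ₁Ex (ζ : ℂ) x) atBot (nhds 0) ∧
    Tendsto (fun x : ℝ =>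
        Complex.exp (-Complex.I * (ζ : ℂ) ^ 2 * x) * ψ₂Ex (ζ : ℂ) x) atTop (nhds 1) ∧
    Tendsto (fun x : ℝ =>
        Complex.exp (-Complex.I * (ζ : ℂ) ^ 2 * x) * ψ₂Ex (ζ : ℂ) x) atBot
      (nhds (-2 * ((ζ : ℂ) ^ 2 - Complex.I) / ((ζ : ℂ) ^ 2 + 2 * Complex.I))) ∧
    -2 * ((ζ : ℂ) ^ 2 - Complex.I) / ((ζ : ℂ) ^ 2 + 2 * Complex.I)
      = 1 / (-(((ζ : ℂ) ^ 2 + 2 * Complex.I)) / (2 * ((ζ : ℂ) ^ 2 - Complex.I))) := by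
  have him : ((ζ : ℂ) ^ 2).im = 0 := by rw [← ofReal_pow, ofReal_im]
  exact example63_asymptotics_general (fun h => by simpa [him] using congrArg im h)
    (fun h => by simpa [him] using congrArg im h) (by simp [him]) (by simp [him])
end
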